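/- For every positive integer ℓ, the maximum number of induced copies of P⃗₄ over all T⃗₃-free oriented graphs on n = 5ℓ vertices equals 5ℓ⁴, and this maximum is attained only by the balanced blow-up C⃗₅(n) of the directed 5-cycle (up to isomorphism). -/

import Mathlib

open scoped Classical

/-- An oriented graph: the arc relation has no loops and no 2-cycles. -/
def IsOriented {V : Type*} (A : V → V → Prop) : Prop :=
  ∀ a b : V, A a b → ¬ A b a

/-- `T⃗₃`-freeness: no three vertices span the arcs a→b, b→c, a→c. -/
def T3Free {V : Type*} (A : V → V → Prop) : Prop :=
  ∀ a b c : V, ¬ (A a b ∧ A b c ∧ A a c)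

/-- `S` is the vertex set of an induced copy of the directed path `P⃗ₖ` in the
oriented graph with arc relation `A`. -/
def IsInducedPath {V : Type*} (A : V → V → Prop) (k : ℕ) (S : Finset V) : Prop :=
  ∃ f : Fin k → V, Function.Injective f ∧ (∀ v : V, v ∈ S ↔ ∃ i, f i = v) ∧
    ∀ i j : Fin k, A (f i) (f j) ↔ (j : ℕ) = (i : ℕ) + 1

/-- The number of induced copies of `P⃗ₖ`. -/
noncomputable def numPaths {V : Type*} [Fintype V] [DecidableEq V]
    (A : V → V → Prop) (k : ℕ) : ℕ :=
  (Finset.univ.filter fun S : Finset V => IsInducedPath A k S).card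

/-- The number of induced copies of `P⃗ₖ` containing all vertices of `T`. -/
noncomputable def numPathsThrough {V : Type*} [Fintype V] [DecidableEq V]
    (A : V → V → Prop) (k : ℕ) (T : Finset V) : ℕ :=
  (Finset.univ.filter fun S : Finset V => IsInducedPath A k S ∧ T ⊆ S).card

/-- The density of induced copies of `P⃗ₖ`. -/
noncomputable def pathDensity {V : Type*} [Fintype V] [DecidableEq V]
    (A : V → V → Prop) (k : ℕ) : ℝ :=
  (numPaths A k : ℝ) / ((Fintype.card V).choose k : ℝ)

/-- The maximum density of induced copies of `P⃗ₖ` over all `T⃗₃`-free oriented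
graphs on `n` vertices. -/
noncomputable def maxDensityT3 (k n : ℕ) : ℝ :=
  sSup {d : ℝ | ∃ A : Fin n → Fin n → Prop, IsOriented A ∧ T3Free A ∧ d = pathDensity A k}

/-- The maximum density of induced copies of `P⃗ₖ` over all oriented graphs on `n`
vertices. -/
noncomputable def maxDensityAll (k n : ℕ) : ℝ :=
  sSup {d : ℝ | ∃ A : Fin n → Fin n → Prop, IsOriented A ∧ d = pathDensity A k}

/-- `S` is the vertex set of an induced copy of the oriented graph `H` in the
oriented graph with arc relation `A`. -/
def IsInducedCopy {V W : Type*} (H : W → W → Prop) (A : V → V → Prop) (S : Finset V) : Prop :=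
  ∃ f : W → V, Function.Injective f ∧ (∀ v : V, v ∈ S ↔ ∃ w, f w = v) ∧
    ∀ a b : W, A (f a) (f b) ↔ H a b

/-- The number of induced copies of `H` in `A`. -/
noncomputable def numCopies {V W : Type*} [Fintype V] [DecidableEq V]
    (H : W → W → Prop) (A : V → V → Prop) : ℕ :=
  (Finset.univ.filter fun S : Finset V => IsInducedCopy H A S).card

/-- The number of (unordered) pairs of vertices on which the two oriented graphs `A`
and `B` differ (an arc must be added, removed, or reoriented). -/
noncomputable def pairDiff {V : Type*} [Fintype V] [LinearOrder V]
    (A B : V → V → Prop) : ℕ :=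
  (Finset.univ.filter fun p : V × V => p.1 < p.2 ∧
    ¬ ((A p.1 p.2 ↔ B p.1 p.2) ∧ (A p.2 p.1 ↔ B p.2 p.1))).card

/-- `A` is a blow-up of the directed 5-cycle with parts given by the fibers of `g`. -/
def IsBlowupC5 {V : Type*} (A : V → V → Prop) (g : V → Fin 5) : Prop :=
  ∀ u v : V, A u v ↔ g v = g u + 1

/-- The size of the part of vertices mapped to `i`. -/
noncomputable def partSize {V : Type*} [Fintype V] {m : ℕ} (g : V → Fin m) (i : Fin m) : ℕ :=
  (Finset.univ.filter fun v : V => g v = i).card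

/-- `A` is a balanced blow-up of the directed 5-cycle, i.e. isomorphic to `C⃗₅(n)`. -/
def IsBalancedBlowupC5 {V : Type*} [Fintype V] (A : V → V → Prop) : Prop :=
  ∃ g : V → Fin 5, IsBlowupC5 A g ∧
    ∀ i j : Fin 5, (partSize g i : ℤ) - (partSize g j : ℤ) ≤ 1

/-!
Let `P` be the number of induced copies of `P⃗₄` in a `T⃗₃`-free oriented graph on `n` vertices.
The proof is a sum-of-squares certificate for `125 P ≤ n⁴`. With `m(u, v)` the number of common
non-neighbours of `u` and `v`, with `δ = d⁺ - d⁻`, and with sums over ordered pairs,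

  `8 (n⁴ - 125 P) = ∑_{u → v} [100 (d⁻(u) - d⁺(v))² + 20 (d⁻(u) + d⁺(v) - 2 m(u, v))²]`
  `  + ∑_{u ≁ v} [25 (d(u) - d(v))² + 15 (δ(u) - δ(v))²]`
  `  + n ∑_u [2 (5 d(u) - 2 n)² + 30 δ(u)²] + S`.

The bases of the squares all vanish on the balanced blow-up of `C⃗₅`. Expanding the squares writes
the remainder `S` as a sum over quadruples of vertices, repetitions allowed, of a local slack which,
averaged over the orderings of the quadruple, depends only on the arcs that it spans. A finite check
shows that the average is nonnegative if there is no `T⃗₃`, and that, when it is zero on a quadruple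
`(u, v, x, y)` with `u → v`, the arcs from `u` and `v` place `x` and `y` in parts of a blow-up of
`C⃗₅` which decide whether `x → y`. Hence in the case of equality a single arc determines a blow-up
structure on the whole graph, and the squares at the vertices make its parts equal.
-/

open Finset Equiv

section Sums

theorem sum_sum_comp_perm {ι V M : Type*} [Fintype ι] [DecidableEq ι] [Fintype V]
    [AddCommMonoid M] (h : (ι → V) → M) :
    ∑ f : ι → V, ∑ σ : Perm ι, h (f ∘ σ) = (Fintype.card ι).factorial • ∑ f, h f := by
  rw [sum_comm]
  have h_perm (σ : Perm ι) : ∑ f : ι → V, h (f ∘ σ) = ∑ f, h f :=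
    (σ.symm.arrowCongr (.refl V)).sum_comp h
  simp [h_perm, Fintype.card_perm]

theorem sum_fin_four_arrow {V M : Type*} [Fintype V] [AddCommMonoid M] (h : V → V → V → V → M) :
    ∑ f : Fin 4 → V, h (f 0) (f 1) (f 2) (f 3) = ∑ u, ∑ v, ∑ x, ∑ y, h u v x y := by
  let e : (Fin 4 → V) ≃ V × V × V × V :=
    { toFun f := (f 0, f 1, f 2, f 3)
      invFun t := ![t.1, t.2.1, t.2.2.1, t.2.2.2]
      left_inv f := by ext i; fin_cases i <;> rfl
      right_inv _ := rfl }
  have h_sum := e.sum_comp fun t ↦ h t.1 t.2.1 t.2.2.1 t.2.2.2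
  simp only [Fintype.sum_prod_type] at h_sum
  exact h_sum

theorem forall_sub_le_one_iff_forall_mul_eq_sum {m : ℕ} {s : Fin m → ℕ} (hm : m ∣ ∑ i, s i) :
    (∀ i j, (s i : ℤ) - s j ≤ 1) ↔ ∀ i, m * s i = ∑ j, s j := by
  refine ⟨fun h i ↦ ?_, fun h i j ↦ ?_⟩
  · have h_upper : ∑ j, ((s i : ℤ) - s j) < ∑ _j : Fin m, 1 :=
      sum_lt_sum (fun j _ ↦ h i j) ⟨i, mem_univ i, by simp⟩
    have h_lower : ∑ j, ((s j : ℤ) - s i) < ∑ _j : Fin m, 1 :=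
      sum_lt_sum (fun j _ ↦ h j i) ⟨i, mem_univ i, by simp⟩
    simp only [sum_sub_distrib, sum_const, card_univ, Fintype.card_fin, nsmul_eq_mul,
      mul_one] at h_upper h_lower
    have h_dvd : (m : ℤ) ∣ m * s i - ∑ j, (s j : ℤ) :=
      dvd_sub (dvd_mul_right _ _) (by exact_mod_cast hm)
    have h_zero := Int.eq_zero_of_abs_lt_dvd h_dvd (abs_lt.2 ⟨by linarith, h_upper⟩)
    exact_mod_cast sub_eq_zero.1 h_zero
  · have h_eq : s i = s j := Nat.eq_of_mul_eq_mul_left i.pos ((h i).trans (h j).symm)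
    simp [h_eq]

end Sums

section InducedPath

variable {V : Type*} {A : V → V → Prop} {k : ℕ} {f f' : Fin k → V}

theorem injective_of_forall_arc_iff (hf : ∀ i j, A (f i) (f j) ↔ (j : ℕ) = i + 1) :
    Function.Injective f := by
  intro i j hij
  by_contra hne
  wlog hlt : i < j generalizing i j
  · exact this hij.symm (Ne.symm hne) (lt_of_le_of_ne (not_lt.1 hlt) (Ne.symm hne))
  let i' : Fin k := ⟨i + 1, by lia⟩
  have h_arc : A (f j) (f i') := hij ▸ (hf i i').2 rfl
  have : (i : ℕ) + 1 = j + 1 := (hf j i').1 h_arc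
  lia

theorem eq_of_forall_arc_iff_of_range_eq (hf : ∀ i j, A (f i) (f j) ↔ (j : ℕ) = i + 1)
    (hf' : ∀ i j, A (f' i) (f' j) ↔ (j : ℕ) = i + 1) (h_range : Set.range f = Set.range f') :
    f = f' := by
  have h_mem (i : Fin k) : f i ∈ Set.range f' := h_range ▸ Set.mem_range_self i
  choose s hs using h_mem
  have h_succ (i j : Fin k) : (s j : ℕ) = s i + 1 ↔ (j : ℕ) = i + 1 := by
    rw [← hf i j, ← hf' (s i) (s j), hs, hs]
  have h_mono : StrictMono s := by
    cases k with
    | zero => exact fun i ↦ i.elim0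
    | succ k =>
      refine Fin.strictMono_iff_lt_succ.2 fun i ↦ Fin.lt_def.2 ?_
      have := (h_succ i.castSucc i.succ).2 (by simp)
      lia
  have h_surj : Function.Surjective s := Finite.injective_iff_surjective.1 h_mono.injective
  have h_id : s = id := (h_mono.range_inj strictMono_id).1 (by simp [h_surj.range_eq])
  ext i
  rw [← hs i, h_id, id]

theorem numPaths_eq_card_tuples [Fintype V] [DecidableEq V] (A : V → V → Prop) (k : ℕ) :
    numPaths A k = #{f : Fin k → V | ∀ i j, A (f i) (f j) ↔ (j : ℕ) = i + 1} := by
  refine (card_bij (fun f _ ↦ univ.image f) ?_ ?_ ?_).symm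
  · intro f hf
    simp only [mem_filter, mem_univ, true_and] at hf ⊢
    exact ⟨f, injective_of_forall_arc_iff hf, by simp, hf⟩
  · intro f hf f' hf' h_image
    simp only [mem_filter, mem_univ, true_and] at hf hf'
    exact eq_of_forall_arc_iff_of_range_eq hf hf' (by simpa [← coe_inj] using h_image)
  · intro S hS
    obtain ⟨f, -, h_mem, hf⟩ := (mem_filter.1 hS).2
    exact ⟨f, by simpa using hf, by ext v; simp [h_mem v]⟩

end InducedPath

section Blowup

variable {V : Type*} [Fintype V] {A : V → V → Prop} {g : V → Fin 5}

theorem sum_partSize {m : ℕ} (g : V → Fin m) : ∑ i, partSize g i = Fintype.card V :=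
  (card_eq_sum_card_fiberwise fun _ _ ↦ mem_univ _).symm

theorem IsBlowupC5.numPaths_four [DecidableEq V] (hg : IsBlowupC5 A g) :
    numPaths A 4 = ∑ c, ∏ i : Fin 4, partSize g (c + i.castSucc) := by
  have h_step : ∀ i j : Fin 4, j.castSucc = i.castSucc + 1 ↔ (j : ℕ) = i + 1 := by decide
  rw [numPaths_eq_card_tuples,
    card_eq_sum_card_fiberwise (f := fun f ↦ g (f 0)) (t := univ) fun _ _ ↦ mem_univ _]
  refine sum_congr rfl fun c _ ↦ ?_
  simp only [partSize, ← Fintype.card_piFinset]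
  congr 1
  ext f
  simp only [mem_filter, mem_univ, true_and, Fintype.mem_piFinset, hg _ _]
  constructor
  · rintro ⟨h, rfl⟩ i
    have h01 := (h 0 1).2 rfl
    have h12 := (h 1 2).2 rfl
    have h23 := (h 2 3).2 rfl
    fin_cases i <;> simp [h01, h12, h23, add_assoc]
  · intro h
    exact ⟨fun i j ↦ by rw [h, h, add_assoc, add_right_inj, h_step], by simpa using h 0⟩

theorem IsBlowupC5.mul_numPaths_four [DecidableEq V] (hg : IsBlowupC5 A g)
    (h_size : ∀ i, 5 * partSize g i = Fintype.card V) :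
    125 * numPaths A 4 = Fintype.card V ^ 4 := by
  have h_const : ∀ i, partSize g i = partSize g 0 := fun i ↦ by linarith [h_size i, h_size 0]
  rw [hg.numPaths_four, ← h_size 0]
  simp only [h_const, prod_const, sum_const, card_univ, Fintype.card_fin, smul_eq_mul]
  ring

theorem isBalancedBlowupC5_iff_of_five_dvd_card (h_dvd : 5 ∣ Fintype.card V) :
    IsBalancedBlowupC5 A ↔ ∃ g, IsBlowupC5 A g ∧ ∀ i, 5 * partSize g i = Fintype.card V := by
  refine exists_congr fun g ↦ and_congr_right fun _ ↦ ?_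
  rw [← sum_partSize g] at h_dvd ⊢
  exact forall_sub_le_one_iff_forall_mul_eq_sum h_dvd

end Blowup

section ArcSign

variable {V : Type*} {A : V → V → Prop}

/-- The oriented graph `A` as a sign matrix: `1` on arcs, `-1` on reversed arcs, `0` elsewhere. -/
noncomputable def arcSign (A : V → V → Prop) (u v : V) : SignType :=
  if A u v then 1 else if A v u then -1 else 0

theorem arcSign_eq_one_iff {u v : V} : arcSign A u v = 1 ↔ A u v := by
  unfold arcSign
  split_ifs <;> simp_all

theorem IsOriented.arcSign_swap (hA : IsOriented A) (u v : V) :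
    arcSign A v u = -arcSign A u v := by
  have := hA u v
  unfold arcSign
  split_ifs <;> simp_all

theorem T3Free.comp_arcSign (hT : T3Free A) {ι : Type*} (f : ι → V) :
    T3Free fun i j ↦ arcSign A (f i) (f j) = 1 := by
  simp only [arcSign_eq_one_iff]
  exact fun i j k ↦ hT (f i) (f j) (f k)

end ArcSign

section Certificate

/-- For an arc `u → v` and `x` with signs `b` from `u` and `c` from `v`, the contribution of `x`
to `d⁻(u) - d⁺(v)`. -/
def inOutDiff (b c : SignType) : ℤ := (if b = -1 then 1 else 0) - if c = 1 then 1 else 0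

/-- For an arc `u → v` and `x` with signs `b` from `u` and `c` from `v`, the contribution of `x`
to `d⁻(u) + d⁺(v) - 2 m`, where `m` is the number of common non-neighbours of `u` and `v`. -/
def inOutExcess (b c : SignType) : ℤ :=
  (if b = -1 then 1 else 0) + (if c = 1 then 1 else 0) - if b = 0 ∧ c = 0 then 2 else 0

/-- The contribution to `d(u) - d(v)` of a vertex with signs `b` from `u` and `c` from `v`. -/
def degreeDiff (b c : SignType) : ℤ := b ^ 2 - c ^ 2

/-- The contribution to `(d⁺ - d⁻)(u) - (d⁺ - d⁻)(v)` of a vertex with signs `b` from `u` and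
`c` from `v`. -/
def fluxDiff (b c : SignType) : ℤ := b - c

/-- The contribution to `5 d(u) - 2 n` of a vertex with sign `b` from `u`. -/
def degreeExcess (b : SignType) : ℤ := 5 * b ^ 2 - 2

/-- The contribution of the vertices `x` and `y`, with signs `b, b'` from `u` and `c, c'` from
`v`, to the squares attached to an ordered pair `(u, v)` of sign `a`. -/
def pairTerm (a b c b' c' : SignType) : ℤ :=
  if a = 1 then
    100 * (inOutDiff b c * inOutDiff b' c') + 20 * (inOutExcess b c * inOutExcess b' c')
  else if a = 0 then
    25 * (degreeDiff b c * degreeDiff b' c') + 15 * (fluxDiff b c * fluxDiff b' c')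
  else 0

/-- The contribution of the vertices `x` and `y`, with signs `b` and `b'` from `u`, to the
squares attached to `u`. -/
def vertexTerm (b b' : SignType) : ℤ := 2 * (degreeExcess b * degreeExcess b') + 30 * (b * b')

/-- The contribution of a quadruple of vertices with pairwise signs `r` to
`8 (n ^ 4 - 125 P)` minus the squares, where `P` is the number of induced paths. -/
def localSlack (r : Fin 4 → Fin 4 → SignType) : ℤ :=
  8 - 1000 * (if ∀ i j : Fin 4, r i j = 1 ↔ (j : ℕ) = i + 1 then 1 else 0)
    - pairTerm (r 0 1) (r 0 2) (r 1 2) (r 0 3) (r 1 3) - vertexTerm (r 0 1) (r 0 2)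

/-- The slack of an unordered quadruple: `localSlack` summed over all orderings. -/
def symSlack (r : Fin 4 → Fin 4 → SignType) : ℤ :=
  ∑ σ : Perm (Fin 4), localSlack fun i j ↦ r (σ i) (σ j)

/-- The part containing a vertex with signs `b` from `u` and `c` from `v`, in a blow-up of
`C⃗₅` where `u` is in part `0` and `v` in part `1`. -/
def c5Part : SignType → SignType → Fin 5
  | 1, _ => 1
  | -1, _ => 4
  | 0, 1 => 2
  | 0, -1 => 0
  | 0, 0 => 3

/-- The antisymmetric sign matrix on four points whose first two points span an arc. -/
def arcMatrix (b c d e f : SignType) : Fin 4 → Fin 4 → SignType :=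
  ![![0, 1, b, d], ![-1, 0, c, e], ![-b, -c, 0, f], ![-d, -e, -f, 0]]

theorem symSlack_arcMatrix : ∀ b c d e f : SignType,
    T3Free (fun i j ↦ arcMatrix b c d e f i j = 1) →
      0 ≤ symSlack (arcMatrix b c d e f) ∧
      (symSlack (arcMatrix b c d e f) = 0 → (f = 1 ↔ c5Part d e = c5Part b c + 1)) := by
  unfold T3Free
  decide +kernel

variable {r : Fin 4 → Fin 4 → SignType}

theorem eq_arcMatrix (hr : ∀ i j, r j i = -r i j) (h01 : r 0 1 = 1) :
    r = arcMatrix (r 0 2) (r 1 2) (r 0 3) (r 1 3) (r 2 3) := by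
  have h_diag (i : Fin 4) : r i i = 0 := SignType.self_eq_neg_iff.1 (hr i i)
  ext i j
  fin_cases i <;> fin_cases j <;>
    simp [arcMatrix, h_diag, h01, hr 0 1, hr 0 2, hr 1 2, hr 0 3, hr 1 3, hr 2 3]

theorem symSlack_comp_perm (r : Fin 4 → Fin 4 → SignType) (τ : Perm (Fin 4)) :
    symSlack (fun i j ↦ r (τ i) (τ j)) = symSlack r :=
  Equiv.sum_comp (Equiv.mulLeft τ) fun σ : Perm (Fin 4) ↦ localSlack fun i j ↦ r (σ i) (σ j)

theorem symSlack_nonneg_of_arc (hr : ∀ i j, r j i = -r i j) (hT : T3Free fun i j ↦ r i j = 1)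
    (h01 : r 0 1 = 1) : 0 ≤ symSlack r := by
  have h_eq := eq_arcMatrix hr h01
  rw [h_eq] at hT ⊢
  exact (symSlack_arcMatrix _ _ _ _ _ hT).1

theorem symSlack_nonneg (hr : ∀ i j, r j i = -r i j) (hT : T3Free fun i j ↦ r i j = 1) :
    0 ≤ symSlack r := by
  by_cases h_arc : ∃ i j, r i j = 1
  · obtain ⟨i, j, hij⟩ := h_arc
    have h_ne : i ≠ j := by
      rintro rfl
      simp [SignType.self_eq_neg_iff.1 (hr i i)] at hij
    obtain ⟨τ, rfl, rfl⟩ : ∃ τ : Perm (Fin 4), τ 0 = i ∧ τ 1 = j := by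
      clear hij
      revert i j
      decide +kernel
    rw [← symSlack_comp_perm r τ]
    exact symSlack_nonneg_of_arc (fun _ _ ↦ hr _ _) (fun _ _ _ ↦ hT _ _ _) hij
  · have h_zero : r = fun _ _ ↦ 0 := by
      push Not at h_arc
      ext i j
      have h1 := h_arc i j
      have h2 := h_arc j i
      rw [hr i j] at h2
      revert h1 h2
      cases r i j <;> decide
    rw [h_zero]
    decide +kernel

theorem arc_iff_of_symSlack_eq_zero (hr : ∀ i j, r j i = -r i j)
    (hT : T3Free fun i j ↦ r i j = 1) (h01 : r 0 1 = 1) (h_zero : symSlack r = 0) :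
    r 2 3 = 1 ↔ c5Part (r 0 3) (r 1 3) = c5Part (r 0 2) (r 1 2) + 1 := by
  have h_eq := eq_arcMatrix hr h01
  rw [h_eq] at hT h_zero
  exact (symSlack_arcMatrix _ _ _ _ _ hT).2 h_zero

end Certificate

section Degrees

variable {V : Type*} [Fintype V]

/-- The squares attached to an ordered pair of vertices, all zero in a balanced blow-up of `C⃗₅`:
`100 (d⁻(u) - d⁺(v))² + 20 (d⁻(u) + d⁺(v) - 2 m)²` for an arc `u → v` with `m` common
non-neighbours, and `25 (d(u) - d(v))² + 15 ((d⁺ - d⁻)(u) - (d⁺ - d⁻)(v))²` for non-neighbours. -/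
def pairSquares (r : V → V → SignType) (u v : V) : ℤ :=
  if r u v = 1 then
    100 * (∑ x, inOutDiff (r u x) (r v x)) ^ 2 + 20 * (∑ x, inOutExcess (r u x) (r v x)) ^ 2
  else if r u v = 0 then
    25 * (∑ x, degreeDiff (r u x) (r v x)) ^ 2 + 15 * (∑ x, fluxDiff (r u x) (r v x)) ^ 2
  else 0

/-- The squares `2 (5 d(u) - 2 n)² + 30 (d⁺(u) - d⁻(u))²` attached to a vertex, zero exactly when
its in- and outdegree are both `n / 5`. -/
def vertexSquares (r : V → V → SignType) (u : V) : ℤ :=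
  2 * (∑ x, degreeExcess (r u x)) ^ 2 + 30 * (∑ x, (r u x : ℤ)) ^ 2

theorem pairSquares_nonneg (r : V → V → SignType) (u v : V) : 0 ≤ pairSquares r u v := by
  unfold pairSquares
  split_ifs <;> positivity

theorem vertexSquares_nonneg (r : V → V → SignType) (u : V) : 0 ≤ vertexSquares r u := by
  unfold vertexSquares
  positivity

theorem sum_pairTerm (r : V → V → SignType) (u v : V) :
    ∑ x, ∑ y, pairTerm (r u v) (r u x) (r v x) (r u y) (r v y) = pairSquares r u v := by
  unfold pairTerm pairSquares
  split_ifs <;> simp only [sum_add_distrib, ← mul_sum, ← sum_mul, sq, sum_const_zero]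

theorem sum_vertexTerm (r : V → V → SignType) (u : V) :
    ∑ x, ∑ y, vertexTerm (r u x) (r u y) = vertexSquares r u := by
  simp only [vertexTerm, vertexSquares, sum_add_distrib, ← mul_sum, ← sum_mul, sq]

theorem sum_localSlack (r : V → V → SignType) :
    ∑ f : Fin 4 → V, localSlack (fun i j ↦ r (f i) (f j)) =
      8 * (Fintype.card V : ℤ) ^ 4
        - 1000 * #{f : Fin 4 → V | ∀ i j, r (f i) (f j) = 1 ↔ (j : ℕ) = i + 1}
        - ∑ u, ∑ v, pairSquares r u v - Fintype.card V * ∑ u, vertexSquares r u := by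
  have h_pair : ∑ f : Fin 4 → V, pairTerm (r (f 0) (f 1)) (r (f 0) (f 2)) (r (f 1) (f 2))
      (r (f 0) (f 3)) (r (f 1) (f 3)) = ∑ u, ∑ v, pairSquares r u v := by
    simp only [sum_fin_four_arrow fun u v x y ↦
      pairTerm (r u v) (r u x) (r v x) (r u y) (r v y), sum_pairTerm]
  have h_vertex : ∑ f : Fin 4 → V, vertexTerm (r (f 0) (f 1)) (r (f 0) (f 2)) =
      Fintype.card V * ∑ u, vertexSquares r u := by
    simp only [sum_fin_four_arrow fun u v x _ ↦ vertexTerm (r u v) (r u x), sum_const,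
      card_univ, nsmul_eq_mul, ← mul_sum, sum_vertexTerm]
  simp only [localSlack, sum_sub_distrib, ← mul_sum, sum_boole, h_pair, h_vertex]
  simp [mul_comm]

theorem sum_symSlack (r : V → V → SignType) :
    ∑ f : Fin 4 → V, symSlack (fun i j ↦ r (f i) (f j)) =
      24 * ∑ f : Fin 4 → V, localSlack (fun i j ↦ r (f i) (f j)) :=
  (sum_sum_comp_perm fun f : Fin 4 → V ↦ localSlack fun i j ↦ r (f i) (f j)).trans
    (nsmul_eq_mul _ _)

theorem five_mul_card_eq_one_of_vertexSquares_eq_zero {r : V → V → SignType} {u : V}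
    (h : vertexSquares r u = 0) : 5 * #{x | r u x = 1} = Fintype.card V := by
  have h_degree : ∑ x, degreeExcess (r u x) = 0 := by
    unfold vertexSquares at h
    nlinarith [sq_nonneg (∑ x, degreeExcess (r u x)), sq_nonneg (∑ x, (r u x : ℤ))]
  have h_flux : ∑ x, (r u x : ℤ) = 0 := by
    unfold vertexSquares at h
    nlinarith [sq_nonneg (∑ x, degreeExcess (r u x)), sq_nonneg (∑ x, (r u x : ℤ))]
  have h_indicator : ∀ b : SignType,
      10 * (if b = 1 then 1 else 0) = degreeExcess b + 5 * (b : ℤ) + 2 := by decide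
  have h_sum : ∑ x, 10 * (if r u x = 1 then (1 : ℤ) else 0) = 2 * Fintype.card V := by
    simp only [h_indicator, sum_add_distrib, ← mul_sum, h_degree, h_flux]
    simp [mul_comm]
  rw [← mul_sum, sum_boole] at h_sum
  lia

end Degrees

section Extremal

variable {V : Type*} {A : V → V → Prop}

theorem isBlowupC5_of_symSlack_eq_zero (hA : IsOriented A) (hT : T3Free A) {u v : V}
    (huv : A u v) (h : ∀ f : Fin 4 → V, symSlack (fun i j ↦ arcSign A (f i) (f j)) = 0) :
    IsBlowupC5 A fun x ↦ c5Part (arcSign A u x) (arcSign A v x) := by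
  intro x y
  rw [← arcSign_eq_one_iff (A := A)]
  exact arc_iff_of_symSlack_eq_zero (fun _ _ ↦ hA.arcSign_swap _ _)
    (hT.comp_arcSign ![u, v, x, y]) (arcSign_eq_one_iff.2 huv) (h ![u, v, x, y])

theorem symSlack_arcSign_nonneg (hA : IsOriented A) (hT : T3Free A) (f : Fin 4 → V) :
    0 ≤ symSlack fun i j ↦ arcSign A (f i) (f j) :=
  symSlack_nonneg (fun _ _ ↦ hA.arcSign_swap _ _) (hT.comp_arcSign f)

variable [Fintype V]

theorem IsBlowupC5.five_mul_partSize {g : V → Fin 5} (hg : IsBlowupC5 A g) [Nonempty V]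
    (h : ∀ u, vertexSquares (arcSign A) u = 0) (i : Fin 5) :
    5 * partSize g i = Fintype.card V := by
  have h_next (u : V) : 5 * partSize g (g u + 1) = Fintype.card V := by
    simpa only [partSize, arcSign_eq_one_iff, hg u _] using
      five_mul_card_eq_one_of_vertexSquares_eq_zero (h u)
  have h_succ (j : Fin 5) (hj : 5 * partSize g j = Fintype.card V) :
      5 * partSize g (j + 1) = Fintype.card V := by
    have h_pos : 0 < partSize g j := by
      have := Fintype.card_pos (α := V)
      lia
    obtain ⟨u, hu⟩ := card_pos.1 h_pos
    rw [← (mem_filter.1 hu).2]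
    exact h_next u
  obtain ⟨u⟩ := ‹Nonempty V›
  have h_add (k : Fin 5) : 5 * partSize g (g u + 1 + k) = Fintype.card V := by
    induction k using Fin.induction with
    | zero => simpa using h_next u
    | succ k ih => simpa only [← Fin.coeSucc_eq_succ, ← add_assoc] using h_succ _ ih
  simpa using h_add (i - (g u + 1))

variable [DecidableEq V]

theorem sum_symSlack_add_sum_squares (A : V → V → Prop) :
    ∑ f : Fin 4 → V, symSlack (fun i j ↦ arcSign A (f i) (f j))
        + 24 * (∑ u, ∑ v, pairSquares (arcSign A) u v
          + Fintype.card V * ∑ u, vertexSquares (arcSign A) u) =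
      192 * ((Fintype.card V : ℤ) ^ 4 - 125 * numPaths A 4) := by
  rw [sum_symSlack, sum_localSlack, numPaths_eq_card_tuples]
  simp only [arcSign_eq_one_iff]
  ring

theorem sum_symSlack_add_sum_vertexSquares_le (A : V → V → Prop) :
    ∑ f : Fin 4 → V, symSlack (fun i j ↦ arcSign A (f i) (f j))
        + 24 * (Fintype.card V * ∑ u, vertexSquares (arcSign A) u) ≤
      192 * ((Fintype.card V : ℤ) ^ 4 - 125 * numPaths A 4) := by
  have h_pair : 0 ≤ ∑ u, ∑ v, pairSquares (arcSign A) u v :=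
    sum_nonneg fun u _ ↦ sum_nonneg fun v _ ↦ pairSquares_nonneg _ u v
  linarith [sum_symSlack_add_sum_squares A]

theorem mul_numPaths_four_le (hA : IsOriented A) (hT : T3Free A) :
    125 * numPaths A 4 ≤ Fintype.card V ^ 4 := by
  have h_slack := sum_nonneg fun f (_ : f ∈ univ) ↦ symSlack_arcSign_nonneg hA hT f
  have h_vertex := sum_nonneg fun u (_ : u ∈ univ) ↦ vertexSquares_nonneg (arcSign A) u
  have h_mul := mul_nonneg (Nat.cast_nonneg (α := ℤ) (Fintype.card V)) h_vertex
  zify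
  linarith [sum_symSlack_add_sum_vertexSquares_le A]

theorem slacks_eq_zero_of_mul_numPaths_four_eq (hA : IsOriented A) (hT : T3Free A)
    (h_eq : 125 * numPaths A 4 = Fintype.card V ^ 4) :
    (∀ f : Fin 4 → V, symSlack (fun i j ↦ arcSign A (f i) (f j)) = 0) ∧
      ∀ u, vertexSquares (arcSign A) u = 0 := by
  have h_slack (f : Fin 4 → V) : 0 ≤ symSlack (fun i j ↦ arcSign A (f i) (f j)) :=
    symSlack_arcSign_nonneg hA hT f
  have h_slack_sum := sum_nonneg fun f (_ : f ∈ univ) ↦ h_slack f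
  have h_vertex (u : V) : 0 ≤ vertexSquares (arcSign A) u := vertexSquares_nonneg _ u
  have h_vertex_sum := sum_nonneg fun u (_ : u ∈ univ) ↦ h_vertex u
  have h_mul := mul_nonneg (Nat.cast_nonneg (α := ℤ) (Fintype.card V)) h_vertex_sum
  have h_le := sum_symSlack_add_sum_vertexSquares_le A
  zify at h_eq
  refine ⟨congrFun <| (Fintype.sum_eq_zero_iff_of_nonneg h_slack).1 (by linarith),
    fun u ↦ ?_⟩
  have h_card : (Fintype.card V : ℤ) ≠ 0 := by
    have := Fintype.card_pos_iff.2 ⟨u⟩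
    lia
  have h_zero : (Fintype.card V : ℤ) * ∑ u, vertexSquares (arcSign A) u = 0 := by linarith
  exact congrFun ((Fintype.sum_eq_zero_iff_of_nonneg h_vertex).1
    ((mul_eq_zero_iff_left h_card).1 h_zero)) u

theorem exists_isBlowupC5_of_mul_numPaths_four_eq (hA : IsOriented A) (hT : T3Free A)
    (h_eq : 125 * numPaths A 4 = Fintype.card V ^ 4) :
    ∃ g, IsBlowupC5 A g ∧ ∀ i, 5 * partSize g i = Fintype.card V := by
  obtain _ | _ := isEmpty_or_nonempty V
  · exact ⟨isEmptyElim, isEmptyElim, fun i ↦ by simp [partSize]⟩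
  have h_pos : 0 < numPaths A 4 := by
    have := pow_pos (Fintype.card_pos (α := V)) 4
    lia
  rw [numPaths_eq_card_tuples] at h_pos
  obtain ⟨f, hf⟩ := card_pos.1 h_pos
  have h_arc : A (f 0) (f 1) := ((mem_filter.1 hf).2 0 1).2 rfl
  obtain ⟨h_slack, h_vertex⟩ := slacks_eq_zero_of_mul_numPaths_four_eq hA hT h_eq
  have hg := isBlowupC5_of_symSlack_eq_zero hA hT h_arc h_slack
  exact ⟨_, hg, hg.five_mul_partSize h_vertex⟩

end Extremal

theorem max_P4_T3free_five_ell_general {V : Type*} [Fintype V] [DecidableEq V]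
    {A : V → V → Prop} (hA : IsOriented A) (hT : T3Free A) :
    125 * numPaths A 4 ≤ Fintype.card V ^ 4 ∧
      (125 * numPaths A 4 = Fintype.card V ^ 4 ↔
        ∃ g, IsBlowupC5 A g ∧ ∀ i, 5 * partSize g i = Fintype.card V) :=
  ⟨mul_numPaths_four_le hA hT, exists_isBlowupC5_of_mul_numPaths_four_eq hA hT,
    fun ⟨_, hg, h_size⟩ ↦ hg.mul_numPaths_four h_size⟩

/-- For every positive integer `ℓ` and `n = 5ℓ`, every `T⃗₃`-free
oriented graph on `n` vertices has at most `5ℓ⁴` induced copies of `P⃗₄`, with equality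
exactly for the balanced blow-up `C⃗₅(n)` of the directed 5-cycle (up to isomorphism). -/
theorem max_P4_T3free_five_ell (ℓ : ℕ) (hℓ : 0 < ℓ)
    (A : Fin (5 * ℓ) → Fin (5 * ℓ) → Prop) (hA : IsOriented A) (hT : T3Free A) :
    numPaths A 4 ≤ 5 * ℓ ^ 4 ∧ (numPaths A 4 = 5 * ℓ ^ 4 ↔ IsBalancedBlowupC5 A) := by
  have h_card : Fintype.card (Fin (5 * ℓ)) ^ 4 = 125 * (5 * ℓ ^ 4) := by
    rw [Fintype.card_fin]
    ring
  have h_dvd : 5 ∣ Fintype.card (Fin (5 * ℓ)) := by simp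
  obtain ⟨h_le, h_eq⟩ := max_P4_T3free_five_ell_general hA hT
  rw [isBalancedBlowupC5_iff_of_five_dvd_card h_dvd, ← h_eq, h_card]
  lia
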